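/- For every finite set S of natural numbers, (√2 − 1) · Σ_{k ∈ S} √(2^k) ≤ √(Σ_{k ∈ S} 2^k). (Equivalently, writing w = Σ_{k ∈ S} 2^k for a sum of distinct powers of 2 with exponents k₁ < k₂ < ⋯ < k_K, one has √w ≥ (√2 − 1) Σ_{l=1}^{K} √(2^{k_l}).) -/

import Mathlib

/-- For every finite set `S` of natural numbers,
`(√2 − 1) · Σ_{k ∈ S} √(2^k) ≤ √(Σ_{k ∈ S} 2^k)`. -/
theorem sqrt_two_sub_one_mul_sum_sqrt_pow_le (S : Finset ℕ) :
    (Real.sqrt 2 - 1) * ∑ k ∈ S, Real.sqrt ((2 : ℝ) ^ k) ≤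
      Real.sqrt (∑ k ∈ S, (2 : ℝ) ^ k) := by
  induction S using Finset.induction_on_max with
  | empty => simp
  | insert a s hs ih =>
    have ha : a ∉ s := fun h => lt_irrefl _ (hs a h)
    rw [Finset.sum_insert ha, Finset.sum_insert ha]
    have hW : ∑ k ∈ s, (2 : ℝ) ^ k ≤ 2 ^ a := by
      have h := (Nat.geomSum_lt (m := 2) le_rfl hs).le
      exact_mod_cast h
    have hW0 : 0 ≤ ∑ k ∈ s, (2 : ℝ) ^ k := Finset.sum_nonneg fun k _ => by positivity
    have hle := Real.sqrt_le_sqrt hW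
    have h1 := Real.sq_sqrt hW0
    have h2 := Real.sq_sqrt (show (0 : ℝ) ≤ 2 ^ a by positivity)
    have h3 := Real.sq_sqrt (show (0 : ℝ) ≤ 2 by norm_num)
    have h4 : 0 ≤ √2 - 1 := by
      have := Real.one_le_sqrt.2 (show (1 : ℝ) ≤ 2 by norm_num)
      linarith
    have h5 := Real.sqrt_nonneg ((2 : ℝ) ^ a)
    rw [mul_add]
    refine le_trans (add_le_add_right ih _) (Real.le_sqrt_of_sq_le ?_)
    generalize √(∑ k ∈ s, (2 : ℝ) ^ k) = w at *
    generalize √((2 : ℝ) ^ a) = t at *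
    rw [← h1, ← h2]
    have h6 := mul_le_mul_of_nonneg_left hle (mul_nonneg h4 h5)
    have h7 : (√2 - 1) ^ 2 * t ^ 2 = (3 - 2 * √2) * t ^ 2 := by
      rw [sub_sq, h3]; ring
    nlinarith
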